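/- Let (U_n) be a nested sequence of measurable subsets of Ω with μ(U_n) > 0 for all n and μ(U_n) → 0. Assume that for all sufficiently large integers L the limits α̂_ℓ(L) = lim_{n→∞} μ_{U_n}(τ_{U_n}^{ℓ-1} ≤ L) exist for every ℓ ≥ 1, set α̂_ℓ = lim_{L→∞} α̂_ℓ(L), assume Σ_{ℓ=1}^∞ ℓ·α̂_ℓ < ∞, put α_ℓ = α̂_ℓ − α̂_{ℓ+1}, and assume α_1 = 1 − α̂_2 > 0. For a measurable set U define Z^L_U(x) = Σ_{i=0}^{2L} 1_U(T^i x) and λ_k(L,U) = μ(Z^L_U = k)/μ(Z^L_U > 0). Then for every k ≥ 1 the double limit λ_k = lim_{L→∞} lim_{n→∞} λ_k(L, U_n) exists and λ_k = (α_k − α_{k+1})/α_1. -/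

import Mathlib

open MeasureTheory Filter Topology
open scoped Classical ENNReal

/-- Number of visits of the orbit of `x` to `U` at times `1, …, j`. -/
noncomputable def visits {Ω : Type*} (T : Ω → Ω) (U : Set Ω) (x : Ω) (j : ℕ) : ℕ :=
  ((Finset.Icc 1 j).filter fun i => T^[i] x ∈ U).card

/-- The `ℓ`-th return time to `U` (with value `∞` if undefined, and `τ^0 = 0`). -/
noncomputable def tauIter {Ω : Type*} (T : Ω → Ω) (U : Set Ω) (ℓ : ℕ) (x : Ω) : ℕ∞ :=
  sInf ((fun j : ℕ => (j : ℕ∞)) '' {j : ℕ | ℓ ≤ visits T U x j})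

/-- The conditional probability `μ_U(A) = μ(A ∩ U)/μ(U)` as a real number. -/
noncomputable def condProb {Ω : Type*} [MeasurableSpace Ω] (μ : Measure Ω)
    (U A : Set Ω) : ℝ :=
  (μ (A ∩ U)).toReal / (μ U).toReal

/-- `Z^L_U(x) = Σ_{i=0}^{2L} 1_U(T^i x)`, the number of visits to `U` during `[0, 2L]`. -/
noncomputable def Zcnt {Ω : Type*} (T : Ω → Ω) (U : Set Ω) (L : ℕ) (x : Ω) : ℕ :=
  ((Finset.range (2 * L + 1)).filter fun i => T^[i] x ∈ U).card

/-- `λ_k(L,U) = μ(Z^L_U = k) / μ(Z^L_U > 0)`. -/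
noncomputable def lam {Ω : Type*} [MeasurableSpace Ω] (μ : Measure Ω)
    (T : Ω → Ω) (U : Set Ω) (k L : ℕ) : ℝ :=
  (μ {x | Zcnt T U L x = k}).toReal / (μ {x | 0 < Zcnt T U L x}).toReal

noncomputable def cntC {Ω : Type*} (T : Ω → Ω) (U : Set Ω) (N : ℕ) (x : Ω) : ℕ :=
  ((Finset.range N).filter fun i => T^[i] x ∈ U).card

lemma cntC_succ {Ω : Type*} (T : Ω → Ω) (U : Set Ω) (N : ℕ) (x : Ω) :
    cntC T U (N + 1) x = (if x ∈ U then 1 else 0) + cntC T U N (T x) := by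
  unfold cntC
  simp only [Finset.card_filter]
  rw [Finset.sum_range_succ', add_comm]
  simp only [Function.iterate_succ_apply, Function.iterate_zero_apply]
  congr!

lemma visits_eq {Ω : Type*} (T : Ω → Ω) (U : Set Ω) (N : ℕ) (x : Ω) :
    visits T U x N = cntC T U N (T x) := by
  unfold visits cntC
  simp only [Finset.card_filter]
  rw [Finset.range_eq_Ico, ← Finset.Ico_add_one_right_eq_Icc]
  have := Finset.sum_Ico_add' (fun i => if T^[i] x ∈ U then 1 else 0) 0 N 1
  simp only [zero_add] at this
  rw [← this]
  simp only [Function.iterate_succ_apply]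
  congr!

lemma cntC_meas {Ω : Type*} [MeasurableSpace Ω] {T : Ω → Ω} (hT : Measurable T)
    {U : Set Ω} (hU : MeasurableSet U) (N : ℕ) : Measurable (cntC T U N) := by
  induction N with
  | zero =>
    have : cntC T U 0 = fun _ => 0 := by ext x; simp [cntC]
    rw [this]; exact measurable_const
  | succ N ih =>
    have : cntC T U (N + 1) = fun x => (if x ∈ U then 1 else 0) + cntC T U N (T x) := by
      ext x; exact cntC_succ T U N x
    rw [this]
    exact (Measurable.ite hU measurable_const measurable_const).add (ih.comp hT)

/-- measure of the points of `U` with exactly `m` returns up to time `j` -/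
noncomputable def exactA {Ω : Type*} [MeasurableSpace Ω] (μ : Measure Ω) (T : Ω → Ω)
    (U : Set Ω) (m j : ℕ) : ℝ := μ.real (U ∩ {x | cntC T U j (T x) = m})

lemma real_cnt {Ω : Type*} [MeasurableSpace Ω] (μ : Measure Ω) [IsProbabilityMeasure μ]
    {T : Ω → Ω} (hT : MeasurePreserving T μ μ)
    {U : Set Ω} (hU : MeasurableSet U) (m N : ℕ) :
    μ.real {x | m + 1 ≤ cntC T U N x} = ∑ j ∈ Finset.range N, exactA μ T U m j := by
  induction N with
  | zero => simp [cntC]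
  | succ N ih =>
    have hm := cntC_meas hT.measurable hU N
    have e : {x | m + 1 ≤ cntC T U (N + 1) x} =
        (T ⁻¹' {x | m + 1 ≤ cntC T U N x}) ∪ (U ∩ {x | cntC T U N (T x) = m}) := by
      ext x
      simp only [Set.mem_ofPred_eq, cntC_succ, Set.mem_union, Set.mem_preimage, Set.mem_inter_iff]
      by_cases hx : x ∈ U <;> simp [hx] <;> omega
    rw [Finset.sum_range_succ, ← ih, e, measureReal_union]
    · congr 1
      exact hT.measureReal_preimage
        (measurableSet_le measurable_const hm).nullMeasurableSet
    · rw [Set.disjoint_left]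
      rintro x hx ⟨-, hx'⟩
      simp only [Set.mem_ofPred_eq, Set.mem_preimage] at hx hx'
      omega
    · exact hU.inter (hT.measurable (hm (measurableSet_singleton m)))

lemma tau_le {Ω : Type*} (T : Ω → Ω) (U : Set Ω) (l L : ℕ) (x : Ω) :
    tauIter T U l x ≤ (L : ℕ∞) ↔ l ≤ cntC T U L (T x) := by
  rw [← visits_eq]
  unfold tauIter
  constructor
  · intro h
    have hne : ((fun j : ℕ => (j : ℕ∞)) '' {j : ℕ | l ≤ visits T U x j}).Nonempty := by
      by_contra hne
      rw [Set.not_nonempty_iff_eq_empty] at hne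
      rw [hne] at h
      simp at h
    obtain ⟨j, hj, hj'⟩ := csInf_mem hne
    rw [← hj'] at h
    have hjL : j ≤ L := by simpa using h
    refine le_trans hj ?_
    unfold visits
    apply Finset.card_le_card
    apply Finset.filter_subset_filter
    exact Finset.Icc_subset_Icc_right hjL
  · intro h
    exact sInf_le ⟨L, h, rfl⟩

lemma condProb_sub {Ω : Type*} [MeasurableSpace Ω] (μ : Measure Ω) [IsProbabilityMeasure μ]
    {T : Ω → Ω} (hT : Measurable T) {U : Set Ω} (hU : MeasurableSet U) (m j : ℕ) :
    exactA μ T U m j / μ.real U = condProb μ U {x | tauIter T U m x ≤ (j : ℕ∞)} -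
      condProb μ U {x | tauIter T U (m + 1) x ≤ (j : ℕ∞)} := by
  unfold condProb exactA
  simp only [tau_le]
  rw [← sub_div]
  congr 1
  have hm := (cntC_meas hT hU j).comp hT
  have e : {x | m ≤ cntC T U j (T x)} ∩ U =
      (U ∩ {x | cntC T U j (T x) = m}) ∪ ({x | m + 1 ≤ cntC T U j (T x)} ∩ U) := by
    ext x
    simp only [Set.mem_ofPred_eq, Set.mem_union, Set.mem_inter_iff]
    by_cases hx : x ∈ U <;> simp [hx] <;> omega
  change _ = μ.real _ - μ.real _
  rw [e, measureReal_union]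
  · ring
  · rw [Set.disjoint_left]
    rintro x ⟨-, hx⟩ ⟨hx', -⟩
    simp only [Set.mem_ofPred_eq] at hx hx'
    omega
  · exact (measurableSet_le measurable_const hm).inter hU

/-- Averaging along the iterated limit. -/
lemma avg_lim (q : ℕ → ℕ → ℝ) (hq0 : ∀ n j, 0 ≤ q n j) (hq1 : ∀ n j, q n j ≤ 1)
    (r : ℕ → ℝ) (β : ℝ) (L₁ : ℕ)
    (h : ∀ j ≥ L₁, Tendsto (fun n => q n j) atTop (𝓝 (r j)))
    (hr : Tendsto r atTop (𝓝 β)) :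
    Tendsto (fun p : ℕ × ℕ => ((2 * p.1 + 1 : ℕ) : ℝ)⁻¹ *
      ∑ j ∈ Finset.range (2 * p.1 + 1), q p.2 j) (atTop.curry atTop) (𝓝 β) := by
  set r' : ℕ → ℝ := fun j => if L₁ ≤ j then r j else 0 with hr'
  have hr't : Tendsto r' atTop (𝓝 β) := by
    refine hr.congr' ?_
    filter_upwards [eventually_ge_atTop L₁] with j hj
    simp [hr', hj]
  have hN : Tendsto (fun L : ℕ => 2 * L + 1) atTop atTop :=
    tendsto_atTop_mono (fun L => by simp only [id]; omega) tendsto_id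
  have hces := hr't.cesaro.comp hN
  have hsm : Tendsto (fun L : ℕ => ((2 * L + 1 : ℕ) : ℝ)⁻¹ * (L₁ : ℝ)) atTop (𝓝 0) := by
    have := ((tendsto_inv_atTop_nhds_zero_nat (𝕜 := ℝ)).comp hN).mul_const (L₁ : ℝ)
    simpa using this
  rw [Metric.tendsto_nhds]
  intro δ hδ
  rw [Filter.eventually_curry_iff]
  filter_upwards [Metric.tendsto_nhds.1 hces (δ / 3) (by positivity),
    Metric.tendsto_nhds.1 hsm (δ / 3) (by positivity)] with L hL1 hL2
  set q' : ℕ → ℕ → ℝ := fun n j => if L₁ ≤ j then q n j else 0 with hq'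
  have hin : Tendsto (fun n => ((2 * L + 1 : ℕ) : ℝ)⁻¹ *
      ∑ j ∈ Finset.range (2 * L + 1), q' n j) atTop
      (𝓝 (((2 * L + 1 : ℕ) : ℝ)⁻¹ * ∑ j ∈ Finset.range (2 * L + 1), r' j)) := by
    refine Tendsto.const_mul _ (tendsto_finsetSum _ fun j _ => ?_)
    by_cases hj : L₁ ≤ j
    · simpa [hq', hr', hj] using h j hj
    · simp [hq', hr', hj]
  filter_upwards [Metric.tendsto_nhds.1 hin (δ / 3) (by positivity)] with n hn
  have hc : (0 : ℝ) ≤ ((2 * L + 1 : ℕ) : ℝ)⁻¹ := by positivity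
  have hlow : ∑ j ∈ Finset.range (2 * L + 1), q' n j ≤ ∑ j ∈ Finset.range (2 * L + 1), q n j := by
    refine Finset.sum_le_sum fun j _ => ?_
    by_cases hj : L₁ ≤ j <;> simp [hq', hj, hq0]
  have hup : ∑ j ∈ Finset.range (2 * L + 1), q n j ≤
      ∑ j ∈ Finset.range (2 * L + 1), q' n j + L₁ := by
    have h1 : ∑ j ∈ Finset.range (2 * L + 1), q n j ≤
      ∑ j ∈ Finset.range (2 * L + 1), (q' n j + if j < L₁ then 1 else 0) := by
      refine Finset.sum_le_sum fun j _ => ?_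
      by_cases hj : L₁ ≤ j
      · simp [hq', hj, not_lt.2 hj]
      · simp [hq', hj, not_le.1 hj, hq1]
    rw [Finset.sum_add_distrib] at h1
    refine h1.trans (add_le_add_right ?_ _)
    rw [← Finset.sum_filter, Finset.sum_const, nsmul_eq_mul, mul_one]
    have : ((Finset.range (2 * L + 1)).filter (· < L₁)).card ≤ (Finset.range L₁).card :=
      Finset.card_le_card fun j hj => by simp at hj ⊢; exact hj.2
    simp only [Finset.card_range] at this
    exact_mod_cast this
  have hlow' := mul_le_mul_of_nonneg_left hlow hc
  have hup' := mul_le_mul_of_nonneg_left hup hc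
  rw [mul_add] at hup'
  simp only [Real.dist_eq, Function.comp, abs_lt] at hL1 hL2 hn ⊢
  constructor <;> linarith [hL1.1, hL1.2, hL2.1, hL2.2, hn.1, hn.2]

theorem stmt3 {Ω : Type*} [MeasurableSpace Ω]
    (μ : Measure Ω) [IsProbabilityMeasure μ] (T : Ω → Ω)
    (hT : MeasurePreserving T μ μ)
    (U : ℕ → Set Ω) (hUmeas : ∀ n, MeasurableSet (U n))
    (hnest : ∀ n, U (n + 1) ⊆ U n)
    (hpos : ∀ n, 0 < μ (U n))
    (hto0 : Tendsto (fun n => μ (U n)) atTop (𝓝 0))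
    (hatαL : ℕ → ℕ → ℝ) (hatα : ℕ → ℝ) (L₁ : ℕ)
    (hlimL : ∀ L ≥ L₁, ∀ ℓ ≥ 1,
      Tendsto (fun n => condProb μ (U n) {x | tauIter T (U n) (ℓ - 1) x ≤ (L : ℕ∞)})
        atTop (𝓝 (hatαL ℓ L)))
    (hlim : ∀ ℓ ≥ 1, Tendsto (fun L => hatαL ℓ L) atTop (𝓝 (hatα ℓ)))
    (hsum : Summable fun ℓ : ℕ => (ℓ : ℝ) * hatα ℓ)
    (h1 : hatα 1 = 1)
    (hα1pos : 0 < 1 - hatα 2) :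
    ∀ k ≥ 1, ∀ ε > (0 : ℝ), ∃ L₀ : ℕ, ∀ L ≥ L₀, ∃ N : ℕ, ∀ n ≥ N,
      |lam μ T (U n) k L -
          ((hatα k - hatα (k + 1)) - (hatα (k + 1) - hatα (k + 2))) /
            (hatα 1 - hatα 2)| ≤ ε := by
  intro k hk
  obtain ⟨k, rfl⟩ : ∃ m, k = m + 1 := ⟨k - 1, by omega⟩
  have hposr : ∀ n, 0 < μ.real (U n) := fun n =>
    ENNReal.toReal_pos (hpos n).ne' (measure_ne_top _ _)
  -- normalized averages
  let S : ℕ → ℕ × ℕ → ℝ := fun m p => ((2 * p.1 + 1 : ℕ) : ℝ)⁻¹ *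
      ∑ j ∈ Finset.range (2 * p.1 + 1), (exactA μ T (U p.2) m j / μ.real (U p.2))
  have hS : ∀ m, Tendsto (S m) (atTop.curry atTop) (𝓝 (hatα (m + 1) - hatα (m + 2))) := by
    intro m
    refine avg_lim (fun n j => exactA μ T (U n) m j / μ.real (U n)) ?_ ?_
      (fun j => hatαL (m + 1) j - hatαL (m + 2) j) _ L₁ ?_ ?_
    · intro n j
      exact div_nonneg measureReal_nonneg measureReal_nonneg
    · intro n j
      rw [div_le_one (hposr n)]
      exact measureReal_mono Set.inter_subset_left
    · intro j hj
      simp only [condProb_sub μ hT.measurable (hUmeas _)]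
      exact (hlimL j hj (m + 1) (by omega)).sub (hlimL j hj (m + 2) (by omega))
    · exact (hlim _ (by omega)).sub (hlim _ (by omega))
  have hZ : ∀ m L n, μ.real {x | m + 1 ≤ Zcnt T (U n) L x} =
      S m (L, n) * ((2 * L + 1 : ℕ) * μ.real (U n)) := by
    intro m L n
    have := real_cnt μ hT (hUmeas n) m (2 * L + 1)
    change μ.real {x | m + 1 ≤ cntC T (U n) (2 * L + 1) x} = _
    rw [this]
    simp only [S, ← Finset.sum_div]
    have h2 := (hposr n).ne'
    have h3 : ((2 * L + 1 : ℕ) : ℝ) ≠ 0 := by positivity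
    field_simp
  have hlam : ∀ L n, lam μ T (U n) (k + 1) L = (S k (L, n) - S (k + 1) (L, n)) / S 0 (L, n) := by
    intro L n
    have hm : Measurable (Zcnt T (U n) L) := cntC_meas hT.measurable (hUmeas n) (2 * L + 1)
    have e : {x | k + 1 ≤ Zcnt T (U n) L x} =
        {x | Zcnt T (U n) L x = k + 1} ∪ {x | k + 1 + 1 ≤ Zcnt T (U n) L x} := by
      ext x
      simp only [Set.mem_ofPred_eq, Set.mem_union]
      omega
    have hu : μ.real {x | k + 1 ≤ Zcnt T (U n) L x} =
        μ.real {x | Zcnt T (U n) L x = k + 1} + μ.real {x | k + 1 + 1 ≤ Zcnt T (U n) L x} := by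
      rw [e, measureReal_union]
      · rw [Set.disjoint_left]
        intro x hx hx'
        simp only [Set.mem_ofPred_eq] at hx hx'
        omega
      · exact measurableSet_le measurable_const hm
    have h0 := hZ 0 L n
    rw [hZ, hZ] at hu
    have hc : ((2 * L + 1 : ℕ) * μ.real (U n)) ≠ 0 :=
      mul_ne_zero (by positivity) (hposr n).ne'
    change μ.real {x | Zcnt T (U n) L x = k + 1} / μ.real {x | 0 + 1 ≤ Zcnt T (U n) L x} = _
    rw [h0, ← mul_div_mul_right (S k (L, n) - S (k + 1) (L, n)) _ hc]
    congr 1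
    linarith
  have hfin := ((hS k).sub (hS (k + 1))).div (hS 0) (by simpa [h1] using hα1pos.ne')
  intro ε hε
  have hev := Metric.tendsto_nhds.1 hfin ε hε
  rw [Filter.eventually_curry_iff, eventually_atTop] at hev
  obtain ⟨L₀, hL₀⟩ := hev
  refine ⟨L₀, fun L hL => ?_⟩
  obtain ⟨N, hN⟩ := eventually_atTop.1 (hL₀ L hL)
  refine ⟨N, fun n hn => ?_⟩
  have := (hN n hn).le
  rw [Real.dist_eq] at this
  rw [hlam]
  exact this
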